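/- (Lemma 2.3, explicit form in type A_n) Let 𝔤 be of type A_n, so r = n(n+1)/2, l = n, and the first n indices of 𝐣 are (j_1,…,j_n) = (1,2,…,n). Let 𝐜 ∈ ℕ^r with c_k = 0 for all k > n. Then the monomial E_{α_1}^{(k_1)} E_{α_2}^{(k_2)} ⋯ E_{α_n}^{(k_n)} with k_i = c_n + c_{n−1} + ⋯ + c_{n−i+1} equals E_𝐜 + ∑_{𝐝 > 𝐜 (lex)} ξ_𝐝 E_𝐝 with ξ_𝐝 ∈ ℤ[q,q^{-1}], where E_𝐜 = E_{α_n}^{(c_1)} E_{α_n+α_{n−1}}^{(c_2)} ⋯ E_{α_n+α_{n−1}+⋯+α_1}^{(c_n)} in terms of the PBW root vectors. -/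

import Mathlib

/-!
Common setup for the quantized enveloping algebra `U_q(𝔤)` of Chari–Xi,
"Monomial bases of quantized enveloping algebras".

The base field is `𝔽 = ℚ(q)`, realized as `RatFunc ℚ` with `q = X`.  Given the Cartan matrix
`a : Fin n → Fin n → ℤ` and symmetrizing integers `d : Fin n → ℕ`, the algebra `U = U n a d`
is presented by generators `E i`, `F i`, `K i`, `K i ⁻¹` and the defining relations of
Proposition 1.1 of the paper.  `Uplus` is the subalgebra generated by the `E i`,
`Ediv i m = E i ^ m / [m]_{d i}!` are the divided powers, `𝒜 = ℤ[q,q⁻¹] ⊆ 𝔽`, and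
`UA` is the `𝒜`-subalgebra generated by the divided powers.

Lusztig's braid automorphisms are abstracted as a family `T` of algebra automorphisms,
constrained by the predicate `IsBraid` recording Lusztig's formulas on generators (which
determine `T` uniquely).  For a word `w` (a reduced expression) the PBW root vectors and PBW
monomials are `rootVec T w t m` (`= T_{i₁} ⋯ T_{i_t}(E_{i_{t+1}}^{(m)})`) and
`pbw T w [c₁, …, c_r] = E_{β₁}^{(c₁)} ⋯ E_{β_r}^{(c_r)}`, while
`mono w [c₁, …, c_r] = E_{α_{i₁}}^{(c₁)} ⋯ E_{α_{i_r}}^{(c_r)}` is a monomial in divided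
powers of the Chevalley generators.

The root-lattice combinatorics is handled by `sRefl` (simple reflections acting on
coordinates w.r.t. the simple roots), `rootAt w t` (`= s_{i₁} ⋯ s_{i_t}(α_{i_{t+1}})`) and
`applyWord`; a word is a reduced expression iff all the roots `rootAt w t` are positive
(`IsReducedWord`), and a reduced word represents the longest element `w₀` iff it moreover
sends every simple root to a negative root (`IsLongestWord`).
-/

noncomputable section
namespace ChariXi

/-- The base field `ℚ(q)`. -/
abbrev 𝔽 : Type := RatFunc ℚ

/-- The indeterminate `q`. -/
def qq : 𝔽 := RatFunc.X

/-- The quantum integer `[m]_d = (q^{dm} - q^{-dm})/(q^d - q^{-d})`. -/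
def qInt (dd m : ℕ) : 𝔽 := (qq ^ (dd * m) - qq⁻¹ ^ (dd * m)) / (qq ^ dd - qq⁻¹ ^ dd)

/-- The quantum factorial `[m]_d!`. -/
def qFact (dd : ℕ) : ℕ → 𝔽
  | 0 => 1
  | m + 1 => qInt dd (m + 1) * qFact dd m

/-- The quantum binomial coefficient `[m choose r]_d`. -/
def qBinom (dd m r : ℕ) : 𝔽 := qFact dd m / (qFact dd r * qFact dd (m - r))

/-- `𝒜 = ℤ[q,q⁻¹]` as a subring of `ℚ(q)`. -/
def 𝒜 : Subring 𝔽 := Subring.closure {qq, qq⁻¹}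

/-- `ℤ[q⁻¹]` as a subring of `ℚ(q)`. -/
def 𝒜inv : Subring 𝔽 := Subring.closure {qq⁻¹}

/-- `q⁻¹ ℤ[q⁻¹] ⊆ ℚ(q)`. -/
def qinvZqinv : Set 𝔽 := {x | ∃ y ∈ 𝒜inv, x = qq⁻¹ * y}

/-- Generators of `U_q(𝔤)`. -/
inductive Gen (n : ℕ) : Type
  | E : Fin n → Gen n
  | F : Fin n → Gen n
  | K : Fin n → Gen n
  | Kinv : Fin n → Gen n

variable (n : ℕ)

namespace Fr
/-- `E_{α_i}` in the free algebra. -/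
def E (i : Fin n) : FreeAlgebra 𝔽 (Gen n) := FreeAlgebra.ι 𝔽 (Gen.E i)
/-- `F_{α_i}` in the free algebra. -/
def F (i : Fin n) : FreeAlgebra 𝔽 (Gen n) := FreeAlgebra.ι 𝔽 (Gen.F i)
/-- `K_i` in the free algebra. -/
def K (i : Fin n) : FreeAlgebra 𝔽 (Gen n) := FreeAlgebra.ι 𝔽 (Gen.K i)
/-- `K_i⁻¹` in the free algebra. -/
def Kinv (i : Fin n) : FreeAlgebra 𝔽 (Gen n) := FreeAlgebra.ι 𝔽 (Gen.Kinv i)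
end Fr

variable (a : Fin n → Fin n → ℤ) (d : Fin n → ℕ)

/-- The hypotheses on the Cartan data `(aᵢⱼ)`, `(dᵢ)` of a finite-dimensional complex simple
Lie algebra used in the paper:  `aᵢᵢ = 2`, `aᵢⱼ ≤ 0` for `i ≠ j`, `(dᵢ aᵢⱼ)` is symmetric and
`dᵢ ∈ {1,2,3}`. -/
structure IsCartan : Prop where
  diag : ∀ i, a i i = 2
  offdiag : ∀ i j, i ≠ j → a i j ≤ 0
  symmetrizable : ∀ i j, (d i : ℤ) * a i j = (d j : ℤ) * a j i
  dmem : ∀ i, d i ∈ ({1, 2, 3} : Set ℕ)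

/-- The defining relations of `U_q(𝔤)` (Proposition 1.1 of the paper). -/
inductive Rel : FreeAlgebra 𝔽 (Gen n) → FreeAlgebra 𝔽 (Gen n) → Prop
  | KKinv (i : Fin n) : Rel (Fr.K n i * Fr.Kinv n i) 1
  | KinvK (i : Fin n) : Rel (Fr.Kinv n i * Fr.K n i) 1
  | KK (i j : Fin n) : Rel (Fr.K n i * Fr.K n j) (Fr.K n j * Fr.K n i)
  | KE (i j : Fin n) :
      Rel (Fr.K n i * Fr.E n j) ((qq ^ ((d i : ℤ) * a i j)) • (Fr.E n j * Fr.K n i))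
  | KF (i j : Fin n) :
      Rel (Fr.K n i * Fr.F n j) ((qq ^ (-((d i : ℤ) * a i j))) • (Fr.F n j * Fr.K n i))
  | EF (i j : Fin n) :
      Rel (Fr.E n i * Fr.F n j - Fr.F n j * Fr.E n i)
        (if i = j then (qq ^ (d i) - qq⁻¹ ^ (d i))⁻¹ • (Fr.K n i - Fr.Kinv n i) else 0)
  | serreE (i j : Fin n) (h : i ≠ j) :
      Rel (∑ r ∈ Finset.range ((1 - a i j).toNat + 1),
            ((-1 : 𝔽) ^ r * qBinom (d i) (1 - a i j).toNat r) •
              (Fr.E n i ^ r * Fr.E n j * Fr.E n i ^ ((1 - a i j).toNat - r))) 0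
  | serreF (i j : Fin n) (h : i ≠ j) :
      Rel (∑ r ∈ Finset.range ((1 - a i j).toNat + 1),
            ((-1 : 𝔽) ^ r * qBinom (d i) (1 - a i j).toNat r) •
              (Fr.F n i ^ r * Fr.F n j * Fr.F n i ^ ((1 - a i j).toNat - r))) 0

/-- The quantized enveloping algebra `U_q(𝔤)` over `ℚ(q)`. -/
abbrev U := RingQuot (Rel n a d)

/-- The quotient map. -/
def mk : FreeAlgebra 𝔽 (Gen n) →ₐ[𝔽] U n a d := RingQuot.mkAlgHom 𝔽 (Rel n a d)

/-- The Chevalley generator `E_{α_i}`. -/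
def Eg (i : Fin n) : U n a d := mk n a d (Fr.E n i)
/-- The Chevalley generator `F_{α_i}`. -/
def Fg (i : Fin n) : U n a d := mk n a d (Fr.F n i)
/-- The torus generator `K_i`. -/
def Kg (i : Fin n) : U n a d := mk n a d (Fr.K n i)
/-- The torus generator `K_i⁻¹`. -/
def Kinvg (i : Fin n) : U n a d := mk n a d (Fr.Kinv n i)

/-- The divided power `E_{α_i}^{(m)} = E_{α_i}^m / [m]_{dᵢ}!`. -/
def Ediv (i : Fin n) (m : ℕ) : U n a d := (qFact (d i) m)⁻¹ • Eg n a d i ^ m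
/-- The divided power `F_{α_i}^{(m)}`. -/
def Fdiv (i : Fin n) (m : ℕ) : U n a d := (qFact (d i) m)⁻¹ • Fg n a d i ^ m
/-- Integer powers `K_i^z`. -/
def Kzpow (i : Fin n) (z : ℤ) : U n a d :=
  if 0 ≤ z then Kg n a d i ^ z.toNat else Kinvg n a d i ^ (-z).toNat

/-- `U⁺`, the `ℚ(q)`-subalgebra generated by the `E_{α_i}`. -/
def Uplus : Subalgebra 𝔽 (U n a d) := Algebra.adjoin 𝔽 (Set.range (Eg n a d))

/-- The integral form `U_𝒜⁺`: the `ℤ[q,q⁻¹]`-subalgebra of `U⁺` generated by the divided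
powers `E_{α_i}^{(m)}`. -/
def UA : Subalgebra 𝒜 (U n a d) :=
  Algebra.adjoin 𝒜 {x : U n a d | ∃ i m, x = Ediv n a d i m}

/-- The homogeneous component `U⁺_ν` of `U⁺`:  the span of the monomials in the `E_{α_i}`
in which `i` occurs exactly `ν i` times (extended to integer `ν`, with `U⁺_ν = 0` if some
`ν i < 0`). -/
def wtSpace (ν : Fin n → ℤ) : Submodule 𝔽 (U n a d) :=
  Submodule.span 𝔽
    {x : U n a d | ∃ l : List (Fin n),
      x = (l.map (Eg n a d)).prod ∧ ∀ i, (l.count i : ℤ) = ν i}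

/-- Lusztig's formulas for the braid group operator `Tᵢ` on generators; these determine the
automorphism `Tᵢ` uniquely. -/
structure IsBraid (T : Fin n → U n a d ≃ₐ[𝔽] U n a d) : Prop where
  TEself : ∀ i m, T i (Ediv n a d i m)
      = ((-1 : 𝔽) ^ m * (qq ^ (m * (m - 1)))⁻¹) • (Kinvg n a d i ^ m * Fdiv n a d i m)
  TFself : ∀ i m, T i (Fdiv n a d i m)
      = ((-1 : 𝔽) ^ m * qq ^ (m * (m - 1))) • (Ediv n a d i m * Kg n a d i ^ m)
  TE : ∀ i j m, i ≠ j → T i (Ediv n a d j m)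
      = ∑ s ∈ Finset.range (m * (-(a i j)).toNat + 1),
          ((-1 : 𝔽) ^ s * (qq ^ s)⁻¹) •
            (Ediv n a d i s * Ediv n a d j m * Ediv n a d i (m * (-(a i j)).toNat - s))
  TF : ∀ i j m, i ≠ j → T i (Fdiv n a d j m)
      = ∑ s ∈ Finset.range (m * (-(a i j)).toNat + 1),
          ((-1 : 𝔽) ^ s * qq ^ s) •
            (Fdiv n a d i (m * (-(a i j)).toNat - s) * Fdiv n a d j m * Fdiv n a d i s)
  TK : ∀ i j, T i (Kg n a d j) = Kg n a d j * Kzpow n a d i (-(a i j))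

variable (T : Fin n → U n a d ≃ₐ[𝔽] U n a d)

/-- The PBW root vector `E_{β_{t+1}}^{(m)} = T_{i₁} ⋯ T_{i_t} (E_{α_{i_{t+1}}}^{(m)})`
associated to position `t` (0-based) of the word `w = [i₁, i₂, …]`. -/
def rootVec : List (Fin n) → ℕ → ℕ → U n a d
  | [], _, _ => 1
  | i :: _, 0, m => Ediv n a d i m
  | i :: w, t + 1, m => T i (rootVec w t m)

/-- The PBW monomial `E_𝐜 = E_{β₁}^{(c₁)} ⋯ E_{β_r}^{(c_r)}` for the word `w` and exponent
list `cs`. -/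
def pbw : List (Fin n) → List ℕ → U n a d
  | _, [] => 1
  | [], _ => 1
  | i :: w, c :: cs => Ediv n a d i c * T i (pbw w cs)

/-- The monomial `M_𝐜 = E_{α_{j₁}}^{(c₁)} ⋯ E_{α_{j_r}}^{(c_r)}` in divided powers of the
Chevalley generators, for the word `w = [j₁, …, j_r]`. -/
def mono : List (Fin n) → List ℕ → U n a d
  | _, [] => 1
  | [], _ => 1
  | i :: w, c :: cs => Ediv n a d i c * mono w cs

/-- `d_β` for the root `β` in position `t` of the word `w`: equals `d_{i_{t+1}}`. -/
def dAt : List (Fin n) → ℕ → ℕ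
  | [], _ => 1
  | i :: _, 0 => d i
  | _ :: w, t + 1 => dAt w t

/-- The simple root `α_i` in coordinates. -/
def simpleRoot (i : Fin n) : Fin n → ℤ := fun k => if k = i then 1 else 0

/-- The simple reflection `s_i` acting on the root lattice: `s_i α_j = α_j - a_{ij} α_i`. -/
def sRefl (i : Fin n) (v : Fin n → ℤ) : Fin n → ℤ :=
  fun k => v k - (if k = i then ∑ j, a i j * v j else 0)

/-- The positive root `β_{t+1} = s_{i₁} ⋯ s_{i_t} (α_{i_{t+1}})` associated to position `t`
(0-based) of the word `w`. -/
def rootAt : List (Fin n) → ℕ → (Fin n → ℤ)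
  | [], _ => 0
  | i :: _, 0 => simpleRoot n i
  | i :: w, t + 1 => sRefl n a i (rootAt w t)

/-- The action of the word `w = [i₁, …, i_r]`, i.e. of `s_{i₁} ⋯ s_{i_r}`, on the root
lattice. -/
def applyWord : List (Fin n) → (Fin n → ℤ) → (Fin n → ℤ)
  | [], v => v
  | i :: w, v => sRefl n a i (applyWord w v)

/-- A word is a reduced expression iff all the associated roots `β_t` are positive. -/
def IsReducedWord (w : List (Fin n)) : Prop :=
  ∀ t < w.length, ∀ i, 0 ≤ rootAt n a w t i

/-- A word is a reduced expression of the longest element `w₀` iff it is reduced and sends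
every simple root to a negative root. -/
def IsLongestWord (w : List (Fin n)) : Prop :=
  IsReducedWord n a w ∧ ∀ i j, applyWord n a w (simpleRoot n i) j ≤ 0

/-- Strict lexicographic order on `ℕ^r`, with `(1,0,…,0) > (0,1,…,0) > ⋯ > (0,…,0,1)`:
`c < e` iff at the first index where they differ, `e` is larger. -/
def lexLt {r : ℕ} (c e : Fin r → ℕ) : Prop :=
  ∃ t : Fin r, (∀ s : Fin r, s < t → c s = e s) ∧ c t < e t

/-- Reflexive lexicographic order on `ℕ^r`. -/
def lexLe {r : ℕ} (c e : Fin r → ℕ) : Prop := c = e ∨ lexLt c e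

end ChariXi

/-!
STATEMENT 13 (Lemma 2.3, explicit form in type `Aₙ`): in type `Aₙ` one has
`r = n(n+1)/2`, `l = n`, and the first `n` letters of `jw` are `(s₁, s₂, …, sₙ)`.
If `𝐜 ∈ ℕ^r` has `c_k = 0` for all `k > n`, then the monomial
`E_{α₁}^{(k₁)} E_{α₂}^{(k₂)} ⋯ E_{αₙ}^{(kₙ)}`, with `kᵢ = cₙ + cₙ₋₁ + ⋯ + c_{n-i+1}`,
equals `E_𝐜 + ∑_{𝐝 > 𝐜 (lex)} ξ_𝐝 E_𝐝` with `ξ_𝐝 ∈ ℤ[q,q⁻¹]`.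

Here the Cartan matrix is that of type `Aₙ` (`aCX`), `d ≡ 1`, `jw = γₙγₙ₋₁⋯γ₁` with
`γₘ = s₁⋯sₘ`, and `iw = τ(jw)` for the diagram automorphism `τ = Fin.rev`
(`i ↦ n+1-i` in 1-based labels).  All indices are 0-based (`s_i ↔ i-1 : Fin n`).
-/

open ChariXi

/-- The Cartan matrix of type `Aₙ`. -/
def ChariXi.aTypeA (n : ℕ) : Fin n → Fin n → ℤ := fun i j =>
  if i = j then 2 else if (i : ℕ) + 1 = j ∨ (j : ℕ) + 1 = i then -1 else 0

/-- The word `jw = γₙγₙ₋₁⋯γ₁`, `γₘ = s₁s₂⋯sₘ`, in type `Aₙ`. -/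
def ChariXi.jwordA (n : ℕ) : List (Fin n) :=
  ((List.range n).reverse).flatMap (fun m => (List.finRange n).take (m + 1))

/-- The word `iw = τ(jw)` for the nontrivial diagram automorphism `τ`. -/
def ChariXi.iwordA (n : ℕ) : List (Fin n) := (jwordA n).map Fin.rev

namespace ChariXi

theorem qq_pow_ne_one {k : ℕ} (hk : k ≠ 0) : qq ^ k ≠ 1 := by
  intro h
  have h1 : algebraMap (Polynomial ℚ) 𝔽 (Polynomial.X ^ k) = algebraMap (Polynomial ℚ) 𝔽 1 := by
    simpa [qq] using h
  have h2 := RatFunc.algebraMap_injective ℚ h1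
  have h3 := congrArg Polynomial.natDegree h2
  simp at h3
  exact hk h3

theorem qq_ne_zero : qq ≠ 0 := RatFunc.X_ne_zero

theorem qq_pow_sub_ne_zero {k : ℕ} (hk : k ≠ 0) : qq ^ k - qq⁻¹ ^ k ≠ 0 := by
  intro h
  apply qq_pow_ne_one (k := k + k) (by omega)
  have h0 : qq ^ k ≠ 0 := pow_ne_zero _ qq_ne_zero
  rw [sub_eq_zero, inv_pow] at h
  rw [pow_add]
  nth_rewrite 1 [h]
  exact inv_mul_cancel₀ h0

theorem qq_sub_ne_zero : qq - qq⁻¹ ≠ 0 := by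
  simpa using qq_pow_sub_ne_zero one_ne_zero

theorem qInt_ne_zero {m : ℕ} (hm : m ≠ 0) : qInt 1 m ≠ 0 := by
  unfold qInt
  refine div_ne_zero ?_ ?_
  · simpa using qq_pow_sub_ne_zero hm
  · simpa using qq_sub_ne_zero

theorem qFact_ne_zero (m : ℕ) : qFact 1 m ≠ 0 := by
  induction m with
  | zero => simp [qFact]
  | succ m ih => exact mul_ne_zero (qInt_ne_zero (Nat.succ_ne_zero m)) ih

theorem qInt_one : qInt 1 1 = 1 := by
  simp only [qInt, mul_one, pow_one]
  exact div_self qq_sub_ne_zero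

theorem qInt_two : qInt 1 2 = qq + qq⁻¹ := by
  rw [qInt, div_eq_iff (by simpa using qq_sub_ne_zero)]
  ring

/-- The addition rule `[a + b] = q^a [b] + q^{-b} [a]` for quantum integers. -/
theorem qInt_add (a b : ℕ) :
    qInt 1 (a + b) = qq ^ a * qInt 1 b + qq⁻¹ ^ b * qInt 1 a := by
  have h := qq_sub_ne_zero
  simp only [qInt, one_mul, pow_one]
  rw [mul_div_assoc', mul_div_assoc', ← add_div]
  congr 1
  ring

theorem qq_zpow_mem (z : ℤ) : qq ^ z ∈ 𝒜 := by
  have h1 : qq ∈ 𝒜 := Subring.subset_closure (by simp)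
  have h2 : qq⁻¹ ∈ 𝒜 := Subring.subset_closure (by simp)
  cases z with
  | ofNat m => simpa using pow_mem h1 m
  | negSucc m => simpa [zpow_negSucc, inv_pow] using pow_mem h2 (m + 1)

section QuantumPlane

variable {A : Type*} [Ring A] [Algebra 𝔽 A]

/-- The divided power `x^{(m)} = x^m / [m]!`. -/
def dp (x : A) (m : ℕ) : A := (qFact 1 m)⁻¹ • x ^ m

@[simp] theorem dp_zero (x : A) : dp x 0 = 1 := by simp [dp, qFact]

@[simp] theorem dp_one (x : A) : dp x 1 = x := by simp [dp, qFact, qInt_one]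

theorem mul_dp (x : A) (m : ℕ) : x * dp x m = qInt 1 (m + 1) • dp x (m + 1) := by
  simp only [dp, qFact, smul_smul, mul_smul_comm, pow_succ', mul_inv]
  congr 1
  field_simp [qInt_ne_zero (Nat.succ_ne_zero m)]

theorem dp_mul (x : A) (m : ℕ) : dp x m * x = qInt 1 (m + 1) • dp x (m + 1) := by
  rw [← mul_dp]
  simp only [dp, smul_mul_assoc, mul_smul_comm, pow_mul_comm']

theorem map_dp {B : Type*} [Ring B] [Algebra 𝔽 B] (f : A →ₐ[𝔽] B) (x : A) (m : ℕ) :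
    f (dp x m) = dp (f x) m := by
  simp [dp]

theorem Commute.dp_dp {x y : A} (h : Commute x y) (l m : ℕ) : Commute (dp x l) (dp y m) :=
  ((h.pow_pow l m).smul_left _).smul_right _

theorem dp_mul_of_skew {x b : A} (h : x * b = qq • (b * x)) (t : ℕ) :
    dp x t * b = qq ^ t • (b * dp x t) := by
  have hp : x ^ t * b = qq ^ t • (b * x ^ t) := by
    induction t with
    | zero => simp
    | succ t ih =>
      rw [pow_succ, mul_assoc, h, mul_smul_comm, ← mul_assoc, ih, smul_mul_assoc, smul_smul,
        mul_assoc, pow_succ']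
  rw [dp, smul_mul_assoc, hp, mul_smul_comm, smul_comm]

/-- `x^{(m - t)}`, read as `0` when `t > m`. -/
def dpSub (x : A) (m t : ℕ) : A := if t ≤ m then dp x (m - t) else 0

variable {a b x : A}

theorem dp_mul_generator (hab : a * b = x + qq⁻¹ • (b * a)) (hax : a * x = qq • (x * a))
    (m : ℕ) :
    dp a (m + 1) * b = qq⁻¹ ^ (m + 1) • (b * dp a (m + 1)) + x * dp a m := by
  induction m with
  | zero => simp [hab, add_comm]
  | succ m ih =>
    apply smul_right_injective A (qInt_ne_zero (Nat.succ_ne_zero (m + 1)))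
    have h3 : x * a * dp a m = qInt 1 (m + 1) • (x * dp a (m + 1)) := by
      rw [mul_assoc, mul_dp, mul_smul_comm]
    have h4 : qInt 1 (m + 1 + 1) = qq⁻¹ ^ (m + 1) + qq * qInt 1 (m + 1) := by
      rw [add_comm (m + 1) 1, qInt_add, qInt_one]; ring
    have h5 : qInt 1 (m + 1 + 1) • (dp a (m + 1 + 1) * b)
        = (qq⁻¹ ^ (m + 1) + qq * qInt 1 (m + 1)) • (x * dp a (m + 1))
          + qq⁻¹ ^ (m + 1 + 1) • (b * (a * dp a (m + 1))) := by
      rw [← smul_mul_assoc, ← mul_dp, mul_assoc, ih, mul_add, mul_smul_comm, ← mul_assoc, hab,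
        ← mul_assoc, hax, add_mul, smul_mul_assoc, smul_mul_assoc, h3, mul_assoc b, smul_add,
        smul_smul, smul_smul, add_smul, pow_succ _ (m + 1)]
      abel
    simp only [Nat.succ_eq_add_one]
    rw [h5, mul_dp, smul_add, mul_smul_comm, ← h4, smul_comm, add_comm]

theorem dpSub_mul_generator (hab : a * b = x + qq⁻¹ • (b * a)) (hax : a * x = qq • (x * a))
    (m t : ℕ) :
    dpSub a m t * b = qq ^ (-((m : ℤ) - t)) • (b * dpSub a m t) + x * dpSub a m (t + 1) := by
  rcases lt_trichotomy t m with h | h | h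
  · obtain ⟨s, rfl⟩ : ∃ s, m = t + s + 1 := ⟨m - t - 1, by omega⟩
    have h1 : t + s + 1 - t = s + 1 := by omega
    have h2 : t + s + 1 - (t + 1) = s := by omega
    have h3 : -(((t + s + 1 : ℕ) : ℤ) - t) = -((s + 1 : ℕ) : ℤ) := by push_cast; ring
    rw [dpSub, dpSub, if_pos (by omega), if_pos (by omega), h1, h2, h3, zpow_neg,
      zpow_natCast, ← inv_pow]
    exact dp_mul_generator hab hax s
  · subst h
    simp [dpSub]
  · simp [dpSub, not_le.2 h, show ¬ (t + 1 ≤ m) by omega]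

/-- The straightening formula for two divided powers in the quantized plane of rank two. -/
theorem dp_mul_dp (hab : a * b = x + qq⁻¹ • (b * a)) (hax : a * x = qq • (x * a))
    (hxb : x * b = qq • (b * x)) (m l : ℕ) :
    dp a m * dp b l = ∑ t ∈ Finset.range (l + 1),
      qq ^ (-(((m : ℤ) - t) * ((l : ℤ) - t))) • (dp b (l - t) * dp x t * dpSub a m t) := by
  induction l with
  | zero => simp [dpSub]
  | succ l ih =>
    apply smul_right_injective A (qInt_ne_zero (Nat.succ_ne_zero l))
    simp only [Nat.succ_eq_add_one]
    have key : ∀ t ∈ Finset.range (l + 1),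
        (qq ^ (-(((m : ℤ) - t) * ((l : ℤ) - t))) • (dp b (l - t) * dp x t * dpSub a m t)) * b
        = (qq ^ (-(((m : ℤ) - t) * ((l : ℤ) + 1 - t))) * (qq ^ t * qInt 1 (l + 1 - t))) •
            (dp b (l + 1 - t) * dp x t * dpSub a m t) +
          (qq ^ (-(((m : ℤ) - t) * ((l : ℤ) - t))) * qInt 1 (t + 1)) •
            (dp b (l - t) * dp x (t + 1) * dpSub a m (t + 1)) := by
      intro t ht
      have ht' : t ≤ l := by simpa [Nat.lt_succ_iff] using ht
      have e1 : l + 1 - t = l - t + 1 := by omega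
      have hexp : qq ^ (-(((m : ℤ) - t) * ((l : ℤ) + 1 - t)))
          = qq ^ (-(((m : ℤ) - t) * ((l : ℤ) - t))) * qq ^ (-((m : ℤ) - t)) := by
        rw [← zpow_add₀ qq_ne_zero]
        congr 1
        ring
      have h1 : dp b (l - t) * dp x t * (b * dpSub a m t)
          = (qq ^ t * qInt 1 (l + 1 - t)) • (dp b (l + 1 - t) * dp x t * dpSub a m t) := by
        rw [← mul_assoc, mul_assoc (dp b _), dp_mul_of_skew hxb, mul_smul_comm, ← mul_assoc,
          dp_mul, e1]
        simp only [smul_mul_assoc, smul_smul]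
      have h2 : dp b (l - t) * dp x t * (x * dpSub a m (t + 1))
          = qInt 1 (t + 1) • (dp b (l - t) * dp x (t + 1) * dpSub a m (t + 1)) := by
        rw [← mul_assoc, mul_assoc (dp b _), dp_mul, mul_smul_comm, smul_mul_assoc]
      rw [smul_mul_assoc, mul_assoc, dpSub_mul_generator hab hax, mul_add, mul_smul_comm, h1, h2,
        smul_add, smul_smul, smul_smul, smul_smul, hexp, mul_assoc]
    let f₁ : ℕ → A := fun t => (qq ^ (-(((m : ℤ) - t) * ((l : ℤ) + 1 - t))) *
      (qq ^ t * qInt 1 (l + 1 - t))) • (dp b (l + 1 - t) * dp x t * dpSub a m t)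
    let f₂ : ℕ → A := fun t => (qq ^ (-(((m : ℤ) - t) * ((l : ℤ) + 1 - t))) *
      (qq⁻¹ ^ (l + 1 - t) * qInt 1 t)) • (dp b (l + 1 - t) * dp x t * dpSub a m t)
    have hzero : qInt 1 0 = 0 := by simp [qInt]
    have hf₁ : f₁ (l + 1) = 0 := by simp [f₁, hzero]
    have hf₂ : f₂ 0 = 0 := by simp [f₂, hzero]
    have hshift : ∀ t ∈ Finset.range (l + 1),
        (qq ^ (-(((m : ℤ) - t) * ((l : ℤ) - t))) * qInt 1 (t + 1)) •
          (dp b (l - t) * dp x (t + 1) * dpSub a m (t + 1)) = f₂ (t + 1) := by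
      intro t ht
      have ht' : t ≤ l := by simpa [Nat.lt_succ_iff] using ht
      simp only [f₂, Nat.add_sub_add_right]
      rw [← mul_assoc, inv_pow, ← zpow_natCast, ← zpow_neg, ← zpow_add₀ qq_ne_zero]
      congr 3
      push_cast [ht']
      ring_nf
    have hsum : ∀ t ∈ Finset.range (l + 1 + 1),
        qInt 1 (l + 1) • (qq ^ (-(((m : ℤ) - t) * (((l + 1 : ℕ) : ℤ) - t))) •
          (dp b (l + 1 - t) * dp x t * dpSub a m t)) = f₁ t + f₂ t := by
      intro t ht
      have ht' : t ≤ l + 1 := by simpa [Nat.lt_succ_iff] using ht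
      have hq : qInt 1 (l + 1) = qq ^ t * qInt 1 (l + 1 - t) + qq⁻¹ ^ (l + 1 - t) * qInt 1 t := by
        rw [← qInt_add, Nat.add_sub_cancel' ht']
      simp only [f₁, f₂]
      rw [← add_smul, ← mul_add, ← hq, smul_smul, mul_comm (qInt 1 (l + 1))]
      push_cast
      rfl
    rw [← mul_smul_comm, ← dp_mul, ← mul_assoc, ih, Finset.sum_mul, Finset.sum_congr rfl key,
      Finset.sum_add_distrib, Finset.sum_congr rfl hshift, Finset.smul_sum,
      Finset.sum_congr rfl hsum, Finset.sum_add_distrib, Finset.sum_range_succ f₁ (l + 1),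
      Finset.sum_range_succ' f₂, hf₁, hf₂, add_zero, add_zero]

end QuantumPlane

section RankTwo

variable {k A : Type*} [Field k] [Ring A] [Algebra k A] {q : k}

theorem skew_inv {K K' x : A} {r : k} (h1 : K * K' = 1) (h2 : K' * K = 1)
    (h : K * x = r • (x * K)) : x * K' = r • (K' * x) := by
  calc x * K' = K' * (K * x) * K' := by rw [← mul_assoc, h2, one_mul]
    _ = r • (K' * x) := by
      rw [h, mul_smul_comm, smul_mul_assoc, ← mul_assoc, mul_assoc, h1, mul_one]

theorem skew_mul {K x y : A} {r s : k} (hx : K * x = r • (x * K)) (hy : K * y = s • (y * K)) :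
    K * (x * y) = (r * s) • (x * y * K) := by
  rw [← mul_assoc, hx, smul_mul_assoc, mul_assoc, hy, mul_smul_comm, smul_smul, mul_assoc]

theorem skew_sub {K x y : A} {r : k} (hx : K * x = r • (x * K)) (hy : K * y = r • (y * K)) :
    K * (x - y) = r • ((x - y) * K) := by
  rw [mul_sub, hx, hy, sub_mul, smul_sub]

theorem skew_smul {K x : A} {r : k} (s : k) (hx : K * x = r • (x * K)) :
    K * (s • x) = r • ((s • x) * K) := by
  rw [mul_smul_comm, hx, smul_mul_assoc, smul_comm]

theorem braid_braid_E (hq : q ≠ 0) (hq' : q - q⁻¹ ≠ 0) {K K' F x y : A}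
    (h1 : K * K' = 1) (h2 : K' * K = 1)
    (hx : K * x = q⁻¹ • (x * K)) (hy : K * y = q ^ 2 • (y * K))
    (hyF : y * F - F * y = (q - q⁻¹)⁻¹ • (K - K')) (hxF : x * F = F * x) :
    -(K' * F) * (x * y - q⁻¹ • (y * x)) - q⁻¹ • ((x * y - q⁻¹ • (y * x)) * -(K' * F)) = x := by
  have hY : K * (x * y - q⁻¹ • (y * x)) = q • ((x * y - q⁻¹ • (y * x)) * K) := by
    have e1 := skew_mul hx hy
    have e2 := skew_mul hy hx
    rw [show q⁻¹ * q ^ 2 = q by field_simp] at e1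
    rw [show q ^ 2 * q⁻¹ = q by field_simp] at e2
    exact skew_sub e1 (skew_smul _ e2)
  have hY' := skew_inv h1 h2 hY
  have hc : (x * y - q⁻¹ • (y * x)) * F - F * (x * y - q⁻¹ • (y * x))
      = (q - q⁻¹)⁻¹ • (x * (K - K') - q⁻¹ • ((K - K') * x)) := by
    calc _ = x * (y * F - F * y) - q⁻¹ • ((y * F - F * y) * x) := by
          simp only [sub_mul, mul_sub, smul_mul_assoc, mul_smul_comm, smul_sub, mul_assoc, hxF]
          simp only [← mul_assoc, hxF]
          abel
      _ = _ := by rw [hyF, mul_smul_comm, smul_mul_assoc, smul_comm q⁻¹, smul_sub]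
  have hK : x * (K - K') - q⁻¹ • ((K - K') * x) = (q - q⁻¹) • (K * x) := by
    have e : x * K = q • (K * x) := by rw [hx, smul_smul, mul_inv_cancel₀ hq, one_smul]
    rw [mul_sub, sub_mul, e, skew_inv h1 h2 hx]
    module
  calc _ = K' * ((x * y - q⁻¹ • (y * x)) * F - F * (x * y - q⁻¹ • (y * x))) := by
        generalize x * y - q⁻¹ • (y * x) = Y at *
        rw [mul_neg, ← mul_assoc Y, hY', smul_mul_assoc, smul_neg, smul_smul,
          inv_mul_cancel₀ hq, one_smul]
        noncomm_ring
    _ = x := by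
        rw [hc, hK, smul_smul, inv_mul_cancel₀ hq', one_smul, ← mul_assoc, h2, one_mul]

theorem braid_braid_F (hq : q ≠ 0) (hq' : q - q⁻¹ ≠ 0) {K K' E x y : A}
    (h1 : K * K' = 1) (h2 : K' * K = 1)
    (hx : K * x = q • (x * K)) (hy : K * y = (q⁻¹) ^ 2 • (y * K))
    (hyE : E * y - y * E = (q - q⁻¹)⁻¹ • (K - K')) (hxE : E * x = x * E) :
    (y * x - q • (x * y)) * -(E * K) - q • (-(E * K) * (y * x - q • (x * y))) = x := by
  have hY : K * (y * x - q • (x * y)) = q⁻¹ • ((y * x - q • (x * y)) * K) := by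
    have e1 := skew_mul hx hy
    have e2 := skew_mul hy hx
    rw [show q * (q⁻¹) ^ 2 = q⁻¹ by field_simp] at e1
    rw [show (q⁻¹) ^ 2 * q = q⁻¹ by field_simp] at e2
    exact skew_sub e2 (skew_smul _ e1)
  have hc : E * (y * x - q • (x * y)) - (y * x - q • (x * y)) * E
      = (q - q⁻¹)⁻¹ • ((K - K') * x - q • (x * (K - K'))) := by
    calc _ = (E * y - y * E) * x - q • (x * (E * y - y * E)) := by
          simp only [sub_mul, mul_sub, smul_mul_assoc, mul_smul_comm, smul_sub, mul_assoc, hxE]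
          simp only [← mul_assoc, hxE]
          abel
      _ = _ := by rw [hyE, mul_smul_comm, smul_mul_assoc, smul_comm q, smul_sub]
  have hK : (K - K') * x - q • (x * (K - K')) = (q - q⁻¹) • (x * K') := by
    have e : K' * x = q⁻¹ • (x * K') := by
      rw [skew_inv h1 h2 hx, smul_smul, inv_mul_cancel₀ hq, one_smul]
    rw [mul_sub, sub_mul, e, hx]
    module
  calc _ = (E * (y * x - q • (x * y)) - (y * x - q • (x * y)) * E) * K := by
        generalize y * x - q • (x * y) = Y at *
        rw [neg_mul, mul_assoc E, hY, mul_smul_comm, smul_neg, smul_smul,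
          mul_inv_cancel₀ hq, one_smul]
        noncomm_ring
    _ = x := by
        rw [hc, hK, smul_smul, inv_mul_cancel₀ hq', one_smul, mul_assoc, h2, mul_one]

theorem serre_skew_right (hq : q ≠ 0) {x y : A}
    (h : y ^ 2 * x - (q + q⁻¹) • (y * x * y) + x * y ^ 2 = 0) :
    (x * y - q⁻¹ • (y * x)) * y = q • (y * (x * y - q⁻¹ • (y * x))) := by
  have e : x * y ^ 2 = (q + q⁻¹) • (y * x * y) - y ^ 2 * x := by
    rw [← sub_eq_zero, ← h]; abel
  rw [sub_mul, mul_assoc, ← pow_two, e, mul_sub, smul_mul_assoc, mul_smul_comm, smul_sub,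
    smul_smul, mul_inv_cancel₀ hq, one_smul, ← mul_assoc, ← mul_assoc, ← pow_two]
  module

theorem serre_skew_left (hq : q ≠ 0) {x y : A}
    (h : x ^ 2 * y - (q + q⁻¹) • (x * y * x) + y * x ^ 2 = 0) :
    x * (x * y - q⁻¹ • (y * x)) = q • ((x * y - q⁻¹ • (y * x)) * x) := by
  have e : x ^ 2 * y = (q + q⁻¹) • (x * y * x) - y * x ^ 2 := by
    rw [← sub_eq_zero, ← h]; abel
  rw [mul_sub, ← mul_assoc, ← pow_two, e, sub_mul, smul_mul_assoc, mul_smul_comm, smul_sub,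
    smul_smul, mul_inv_cancel₀ hq, one_smul, ← mul_assoc, mul_assoc y x x, ← pow_two]
  module

end RankTwo

/-- Neighbouring vertices of the Dynkin diagram of type `A`. -/
def Adj (i j : ℕ) : Prop := i + 1 = j ∨ j + 1 = i

theorem Adj.symm {i j : ℕ} (h : Adj i j) : Adj j i := Or.symm h

/-- Elements `E i`, `F i`, `K i`, `K' i` (`i < n`) of an algebra which satisfy the relations of
`U_q(𝔰𝔩_{n+1})`, together with automorphisms `T i` given by Lusztig's formulas. -/
structure IsTypeASystem {A : Type*} [Ring A] [Algebra 𝔽 A] (n : ℕ) (E F K K' : ℕ → A)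
    (T : ℕ → A ≃ₐ[𝔽] A) : Prop where
  K_mul_K' : ∀ i < n, K i * K' i = 1
  K'_mul_K : ∀ i < n, K' i * K i = 1
  K_comm : ∀ i < n, ∀ j < n, K i * K j = K j * K i
  K_E_self : ∀ i < n, K i * E i = qq ^ 2 • (E i * K i)
  K_E_adj : ∀ i < n, ∀ j < n, Adj i j → K i * E j = qq⁻¹ • (E j * K i)
  K_F_self : ∀ i < n, K i * F i = qq⁻¹ ^ 2 • (F i * K i)
  K_F_adj : ∀ i < n, ∀ j < n, Adj i j → K i * F j = qq • (F j * K i)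
  E_F_self : ∀ i < n, E i * F i - F i * E i = (qq - qq⁻¹)⁻¹ • (K i - K' i)
  E_F_comm : ∀ i < n, ∀ j < n, i ≠ j → E i * F j = F j * E i
  E_comm : ∀ i < n, ∀ j < n, i ≠ j → ¬ Adj i j → E i * E j = E j * E i
  serre : ∀ i < n, ∀ j < n, Adj i j →
    E i ^ 2 * E j - (qq + qq⁻¹) • (E i * E j * E i) + E j * E i ^ 2 = 0
  T_E_self : ∀ i < n, T i (E i) = -(K' i * F i)
  T_F_self : ∀ i < n, T i (F i) = -(E i * K i)
  T_K_self : ∀ i < n, T i (K i) = K' i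
  T_E_adj : ∀ i < n, ∀ j < n, Adj i j → T i (E j) = E j * E i - qq⁻¹ • (E i * E j)
  T_F_adj : ∀ i < n, ∀ j < n, Adj i j → T i (F j) = F i * F j - qq • (F j * F i)
  T_K_adj : ∀ i < n, ∀ j < n, Adj i j → T i (K j) = K j * K i
  T_E_far : ∀ i < n, ∀ j < n, i ≠ j → ¬ Adj i j → T i (E j) = E j
  T_F_far : ∀ i < n, ∀ j < n, i ≠ j → ¬ Adj i j → T i (F j) = F j
  T_K_far : ∀ i < n, ∀ j < n, i ≠ j → ¬ Adj i j → T i (K j) = K j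

namespace IsTypeASystem

variable {A : Type*} [Ring A] [Algebra 𝔽 A] {n : ℕ} {E F K K' : ℕ → A} {T : ℕ → A ≃ₐ[𝔽] A}

theorem T_K'_eq (h : IsTypeASystem n E F K K' T) {i j : ℕ} (hj : j < n) {x : A}
    (hx : x * T i (K j) = 1) : T i (K' j) = x := by
  have h1 : T i (K j) * T i (K' j) = 1 := by rw [← map_mul, h.K_mul_K' j hj, map_one]
  exact (left_inv_eq_right_inv hx h1).symm

theorem T_K'_self (h : IsTypeASystem n E F K K' T) (i : ℕ) (hi : i < n) : T i (K' i) = K i :=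
  h.T_K'_eq hi (by rw [h.T_K_self i hi, h.K_mul_K' i hi])

theorem T_K'_adj (h : IsTypeASystem n E F K K' T) (i : ℕ) (hi : i < n) (j : ℕ) (hj : j < n)
    (hij : Adj i j) : T i (K' j) = K' i * K' j :=
  h.T_K'_eq hj (by
    rw [h.T_K_adj i hi j hj hij, mul_assoc, ← mul_assoc (K' j), h.K'_mul_K j hj, one_mul,
      h.K'_mul_K i hi])

theorem T_K'_far (h : IsTypeASystem n E F K K' T) (i : ℕ) (hi : i < n) (j : ℕ) (hj : j < n)
    (hne : i ≠ j) (hij : ¬ Adj i j) : T i (K' j) = K' j :=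
  h.T_K'_eq hj (by rw [h.T_K_far i hi j hj hne hij, h.K'_mul_K j hj])

theorem T_T_E (h : IsTypeASystem n E F K K' T) (i : ℕ) (hi : i < n) (j : ℕ) (hj : j < n)
    (hij : Adj i j) : T j (T i (E j)) = E i := by
  have hne : i ≠ j := by unfold Adj at hij; omega
  rw [h.T_E_adj i hi j hj hij, map_sub, map_smul, map_mul, map_mul, h.T_E_self j hj,
    h.T_E_adj j hj i hi hij.symm]
  exact braid_braid_E qq_ne_zero qq_sub_ne_zero (h.K_mul_K' j hj) (h.K'_mul_K j hj)
    (h.K_E_adj j hj i hi hij.symm) (h.K_E_self j hj) (h.E_F_self j hj)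
    (h.E_F_comm i hi j hj hne)

theorem T_T_F (h : IsTypeASystem n E F K K' T) (i : ℕ) (hi : i < n) (j : ℕ) (hj : j < n)
    (hij : Adj i j) : T j (T i (F j)) = F i := by
  have hne : j ≠ i := by unfold Adj at hij; omega
  rw [h.T_F_adj i hi j hj hij, map_sub, map_smul, map_mul, map_mul, h.T_F_self j hj,
    h.T_F_adj j hj i hi hij.symm]
  exact braid_braid_F qq_ne_zero qq_sub_ne_zero (h.K_mul_K' j hj) (h.K'_mul_K j hj)
    (h.K_F_adj j hj i hi hij.symm) (h.K_F_self j hj) (h.E_F_self j hj)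
    (h.E_F_comm j hj i hi hne)

theorem T_T_K (h : IsTypeASystem n E F K K' T) (i : ℕ) (hi : i < n) (j : ℕ) (hj : j < n)
    (hij : Adj i j) : T j (T i (K j)) = K i := by
  rw [h.T_K_adj i hi j hj hij, map_mul, h.T_K_self j hj, h.T_K_adj j hj i hi hij.symm,
    h.K_comm i hi j hj, ← mul_assoc, h.K'_mul_K j hj, one_mul]

theorem T_T_K' (h : IsTypeASystem n E F K K' T) (i : ℕ) (hi : i < n) (j : ℕ) (hj : j < n)
    (hij : Adj i j) : T j (T i (K' j)) = K' i := by
  have e : K' i * T j (T i (K j)) = 1 := by rw [h.T_T_K i hi j hj hij, h.K'_mul_K i hi]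
  have e' : T j (T i (K j)) * T j (T i (K' j)) = 1 := by
    rw [← map_mul, ← map_mul, h.K_mul_K' j hj, map_one, map_one]
  exact (left_inv_eq_right_inv e e').symm

/-- Straightening of `E_i^{(a)} E_j^{(b)}` for neighbouring `i`, `j`. -/
theorem dp_E_mul_dp_E (h : IsTypeASystem n E F K K' T) (i : ℕ) (hi : i < n) (j : ℕ) (hj : j < n)
    (hij : Adj i j) (a b : ℕ) :
    dp (E i) a * dp (E j) b = ∑ t ∈ Finset.range (b + 1), qq ^ (-(((a : ℤ) - t) * ((b : ℤ) - t))) •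
      (dp (E j) (b - t) * T j (dp (E i) t) * dpSub (E i) a t) := by
  have hx : T j (E i) = E i * E j - qq⁻¹ • (E j * E i) := h.T_E_adj j hj i hi hij.symm
  have hT : ∀ t, T j (dp (E i) t) = dp (T j (E i)) t := fun t => map_dp (T j).toAlgHom _ t
  simp only [hT, hx]
  refine dp_mul_dp (by abel) ?_ ?_ a b
  · exact serre_skew_left qq_ne_zero (h.serre i hi j hj hij)
  · exact serre_skew_right qq_ne_zero (h.serre j hj i hi hij.symm)

end IsTypeASystem

section Words

variable {A : Type*} [Ring A] [Algebra 𝔽 A]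

/-- The PBW monomial of a word in the letters `0, 1, 2, …`. -/
def pbwMonomial (E : ℕ → A) (T : ℕ → A ≃ₐ[𝔽] A) : List ℕ → List ℕ → A
  | _, [] => 1
  | [], _ => 1
  | i :: w, c :: cs => dp (E i) c * T i (pbwMonomial E T w cs)

/-- The composition `T_{i₁} ∘ ⋯ ∘ T_{i_r}` for the word `w = [i₁, …, i_r]`. -/
def braidWord (T : ℕ → A ≃ₐ[𝔽] A) : List ℕ → A ≃ₐ[𝔽] A
  | [] => AlgEquiv.refl
  | i :: w => (braidWord T w).trans (T i)

@[simp] theorem braidWord_nil (T : ℕ → A ≃ₐ[𝔽] A) (x : A) : braidWord T [] x = x := rfl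

@[simp] theorem braidWord_cons (T : ℕ → A ≃ₐ[𝔽] A) (i : ℕ) (w : List ℕ) (x : A) :
    braidWord T (i :: w) x = T i (braidWord T w x) := rfl

/-- The decreasing word `[m - 1, …, 1, 0]`. -/
def descWord : ℕ → List ℕ
  | 0 => []
  | m + 1 => m :: descWord m

/-- The reduced word `(m-1 ⋯ 0)(m-1 ⋯ 1) ⋯ (m-1)` of the longest element of `S_{m+1}`. -/
def longWord : ℕ → List ℕ
  | 0 => []
  | m + 1 => descWord (m + 1) ++ (longWord m).map (· + 1)

@[simp] theorem length_descWord (m : ℕ) : (descWord m).length = m := by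
  induction m with
  | zero => rfl
  | succ m ih => simp [descWord, ih]

theorem length_longWord_succ (m : ℕ) :
    (longWord (m + 1)).length = m + 1 + (longWord m).length := by
  simp [longWord]

theorem descWord_succ (m : ℕ) : descWord (m + 1) = m :: descWord m := rfl

theorem lt_of_mem_descWord {m i : ℕ} (hi : i ∈ descWord m) : i < m := by
  induction m with
  | zero => simp [descWord] at hi
  | succ m ih =>
    rcases List.mem_cons.1 hi with rfl | hi
    · exact Nat.lt_succ_self _
    · exact (ih hi).trans (Nat.lt_succ_self m)

theorem lt_of_mem_longWord {m i : ℕ} (hi : i ∈ longWord m) : i < m := by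
  induction m generalizing i with
  | zero => simp [longWord] at hi
  | succ m ih =>
    rcases List.mem_append.1 hi with hi | hi
    · exact lt_of_mem_descWord hi
    · obtain ⟨j, hj, rfl⟩ := List.mem_map.1 hi
      exact Nat.succ_lt_succ (ih hj)

variable (E : ℕ → A) (T : ℕ → A ≃ₐ[𝔽] A)

@[simp] theorem pbwMonomial_nil_right (w : List ℕ) : pbwMonomial E T w [] = 1 := by
  cases w <;> rfl

@[simp] theorem pbwMonomial_nil_left (cs : List ℕ) : pbwMonomial E T [] cs = 1 := by
  cases cs <;> rfl

theorem pbwMonomial_cons (i : ℕ) (w : List ℕ) (c : ℕ) (cs : List ℕ) :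
    pbwMonomial E T (i :: w) (c :: cs) = dp (E i) c * T i (pbwMonomial E T w cs) := rfl

theorem pbwMonomial_replicate_zero (w : List ℕ) (r : ℕ) :
    pbwMonomial E T w (List.replicate r 0) = 1 := by
  induction w generalizing r with
  | nil => simp
  | cons i w ih =>
    cases r with
    | zero => simp
    | succ r => rw [List.replicate_succ, pbwMonomial_cons, ih, map_one, dp_zero, one_mul]

theorem pbwMonomial_append {w cs : List ℕ} (hl : cs.length = w.length) (w' cs' : List ℕ) :
    pbwMonomial E T (w ++ w') (cs ++ cs') =
      pbwMonomial E T w cs * braidWord T w (pbwMonomial E T w' cs') := by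
  induction w generalizing cs with
  | nil => simp_all
  | cons i w ih =>
    cases cs with
    | nil => simp at hl
    | cons c cs =>
      simp only [List.cons_append, pbwMonomial_cons, braidWord_cons]
      rw [ih (by simpa using hl), map_mul, mul_assoc]

end Words

namespace IsTypeASystem

variable {A : Type*} [Ring A] [Algebra 𝔽 A] {n : ℕ} {E F K K' : ℕ → A} {T : ℕ → A ≃ₐ[𝔽] A}

theorem braidWord_descWord_far {G : ℕ → A}
    (far : ∀ i < n, ∀ j < n, i ≠ j → ¬ Adj i j → T i (G j) = G j) {m j : ℕ} (hj : j + 1 < n)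
    (hm : m ≤ j) : braidWord T (descWord m) (G (j + 1)) = G (j + 1) := by
  induction m with
  | zero => rfl
  | succ m ih =>
    rw [descWord, braidWord_cons, ih (by omega)]
    exact far m (by omega) _ hj (by omega) (by unfold Adj; omega)

theorem braidWord_descWord_shift {G : ℕ → A}
    (far : ∀ i < n, ∀ j < n, i ≠ j → ¬ Adj i j → T i (G j) = G j)
    (adj : ∀ i < n, ∀ j < n, Adj i j → T j (T i (G j)) = G i) {m j : ℕ} (hm : m ≤ n)
    (hj : j + 2 ≤ m) : braidWord T (descWord m) (G (j + 1)) = G j := by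
  induction m, hj using Nat.le_induction with
  | base =>
    rw [descWord, braidWord_cons, descWord, braidWord_cons,
      braidWord_descWord_far far (by omega) le_rfl]
    exact adj j (by omega) (j + 1) (by omega) (Or.inl rfl)
  | succ m hjm ih =>
    rw [descWord, braidWord_cons, ih (by omega)]
    exact far m (by omega) j (by omega) (by omega) (by unfold Adj; omega)

/-- Pairs of generators with indices shifted by one, all indices being less than `m`. -/
def shiftGen (m : ℕ) (E F K K' : ℕ → A) : Set (A × A) :=
  {p | ∃ i, i + 1 < m ∧ (p = (E (i + 1), E i) ∨ p = (F (i + 1), F i) ∨ p = (K (i + 1), K i) ∨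
    p = (K' (i + 1), K' i))}

theorem adjoin_shiftGen_map (h : IsTypeASystem n E F K K' T) {m j : ℕ} (hm : m ≤ n)
    (hj : j + 1 < m) {p : A × A} (hp : p ∈ Algebra.adjoin 𝔽 (shiftGen m E F K K')) :
    (T (j + 1) p.1, T j p.2) ∈ Algebra.adjoin 𝔽 (shiftGen m E F K K') := by
  set S := Algebra.adjoin 𝔽 (shiftGen m E F K K') with hS
  have hE : ∀ {i}, i + 1 < m → (E (i + 1), E i) ∈ S := fun {i} hi =>
    Algebra.subset_adjoin ⟨i, hi, Or.inl rfl⟩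
  have hF : ∀ {i}, i + 1 < m → (F (i + 1), F i) ∈ S := fun {i} hi =>
    Algebra.subset_adjoin ⟨i, hi, Or.inr (Or.inl rfl)⟩
  have hK : ∀ {i}, i + 1 < m → (K (i + 1), K i) ∈ S := fun {i} hi =>
    Algebra.subset_adjoin ⟨i, hi, Or.inr (Or.inr (Or.inl rfl))⟩
  have hK' : ∀ {i}, i + 1 < m → (K' (i + 1), K' i) ∈ S := fun {i} hi =>
    Algebra.subset_adjoin ⟨i, hi, Or.inr (Or.inr (Or.inr rfl))⟩
  induction hp using Algebra.adjoin_induction with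
  | algebraMap r =>
    have e : (T (j + 1) (algebraMap 𝔽 (A × A) r).1, T j (algebraMap 𝔽 (A × A) r).2)
        = algebraMap 𝔽 (A × A) r := by
      simp [Prod.algebraMap_apply]
    rw [e]
    exact S.algebraMap_mem r
  | add x y _ _ hx hy => simpa using S.add_mem hx hy
  | mul x y _ _ hx hy => simpa using S.mul_mem hx hy
  | mem p hp =>
    obtain ⟨i, hi, hp⟩ := hp
    have j1 : j + 1 < n := by omega
    have i1 : i + 1 < n := by omega
    have j0 : j < n := by omega
    have i0 : i < n := by omega
    by_cases hij : j = i
    · subst hij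
      rcases hp with rfl | rfl | rfl | rfl
      · simp only [h.T_E_self _ j1, h.T_E_self _ j0]
        exact S.neg_mem (S.mul_mem (hK' hj) (hF hj))
      · simp only [h.T_F_self _ j1, h.T_F_self _ j0]
        exact S.neg_mem (S.mul_mem (hE hj) (hK hj))
      · simp only [h.T_K_self _ j1, h.T_K_self _ j0]
        exact hK' hj
      · simp only [h.T_K'_self _ j1, h.T_K'_self _ j0]
        exact hK hj
    by_cases had : Adj j i
    · have had' : Adj (j + 1) (i + 1) := by unfold Adj at *; omega
      rcases hp with rfl | rfl | rfl | rfl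
      · simp only [h.T_E_adj _ j1 _ i1 had', h.T_E_adj _ j0 _ i0 had]
        exact S.sub_mem (S.mul_mem (hE hi) (hE hj))
          (S.smul_mem (S.mul_mem (hE hj) (hE hi)) qq⁻¹)
      · simp only [h.T_F_adj _ j1 _ i1 had', h.T_F_adj _ j0 _ i0 had]
        exact S.sub_mem (S.mul_mem (hF hj) (hF hi)) (S.smul_mem (S.mul_mem (hF hi) (hF hj)) qq)
      · simp only [h.T_K_adj _ j1 _ i1 had', h.T_K_adj _ j0 _ i0 had]
        exact S.mul_mem (hK hi) (hK hj)
      · simp only [h.T_K'_adj _ j1 _ i1 had', h.T_K'_adj _ j0 _ i0 had]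
        exact S.mul_mem (hK' hj) (hK' hi)
    · have had' : ¬ Adj (j + 1) (i + 1) := by unfold Adj at *; omega
      have hij' : j + 1 ≠ i + 1 := by omega
      rcases hp with rfl | rfl | rfl | rfl
      · simp only [h.T_E_far _ j1 _ i1 hij' had', h.T_E_far _ j0 _ i0 hij had]
        exact hE hi
      · simp only [h.T_F_far _ j1 _ i1 hij' had', h.T_F_far _ j0 _ i0 hij had]
        exact hF hi
      · simp only [h.T_K_far _ j1 _ i1 hij' had', h.T_K_far _ j0 _ i0 hij had]
        exact hK hi
      · simp only [h.T_K'_far _ j1 _ i1 hij' had', h.T_K'_far _ j0 _ i0 hij had]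
        exact hK' hi

theorem braidWord_descWord_of_mem (h : IsTypeASystem n E F K K' T) {m : ℕ} (hm : m ≤ n)
    {p : A × A} (hp : p ∈ Algebra.adjoin 𝔽 (shiftGen m E F K K')) :
    braidWord T (descWord m) p.1 = p.2 := by
  induction hp using Algebra.adjoin_induction with
  | algebraMap r => simp [Prod.algebraMap_apply]
  | add x y _ _ hx hy => simp [hx, hy]
  | mul x y _ _ hx hy => simp [hx, hy]
  | mem p hp =>
    obtain ⟨i, hi, rfl | rfl | rfl | rfl⟩ := hp
    · exact braidWord_descWord_shift h.T_E_far h.T_T_E hm hi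
    · exact braidWord_descWord_shift h.T_F_far h.T_T_F hm hi
    · exact braidWord_descWord_shift h.T_K_far h.T_T_K hm hi
    · exact braidWord_descWord_shift h.T_K'_far h.T_T_K' hm hi

theorem pbwMonomial_shift_mem (h : IsTypeASystem n E F K K' T) {m : ℕ} (hm : m ≤ n)
    {w : List ℕ} (hw : ∀ i ∈ w, i + 1 < m) (cs : List ℕ) :
    (pbwMonomial E T (w.map (· + 1)) cs, pbwMonomial E T w cs) ∈
      Algebra.adjoin 𝔽 (shiftGen m E F K K') := by
  set S := Algebra.adjoin 𝔽 (shiftGen m E F K K') with hS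
  induction w generalizing cs with
  | nil =>
    simp only [List.map_nil, pbwMonomial_nil_left]
    exact S.one_mem
  | cons i w ih =>
    cases cs with
    | nil =>
      simp only [pbwMonomial_nil_right]
      exact S.one_mem
    | cons c cs =>
      have hi : i + 1 < m := hw i (by simp)
      have hE : (E (i + 1), E i) ∈ S := Algebra.subset_adjoin ⟨i, hi, Or.inl rfl⟩
      have h1 : (dp (E (i + 1)) c, dp (E i) c) ∈ S := S.smul_mem (S.pow_mem hE c) (qFact 1 c)⁻¹
      exact S.mul_mem h1
        (h.adjoin_shiftGen_map hm hi (ih (fun j hj => hw j (List.mem_cons_of_mem _ hj)) cs))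

/-- The Coxeter element `T_{m-1} ⋯ T_0` shifts PBW monomials. -/
theorem pbwMonomial_descWord_append (h : IsTypeASystem n E F K K' T) {m : ℕ} (hm : m ≤ n)
    {w : List ℕ} (hw : ∀ i ∈ w, i + 1 < m) {cs : List ℕ} (hcs : cs.length = m) (ds : List ℕ) :
    pbwMonomial E T (descWord m ++ w.map (· + 1)) (cs ++ ds) =
      pbwMonomial E T (descWord m) cs * pbwMonomial E T w ds := by
  rw [pbwMonomial_append E T (by simpa using hcs)]
  exact congrArg _ (h.braidWord_descWord_of_mem hm (h.pbwMonomial_shift_mem hm hw ds))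

end IsTypeASystem

section Expansion

theorem append_lt_append_of_lt {l l' : List ℕ} (h : l < l') (hl : l.length = l'.length)
    (r r' : List ℕ) : l ++ r < l' ++ r' := by
  induction l generalizing l' with
  | nil =>
    cases l' with
    | nil => exact absurd h (lt_irrefl _)
    | cons => simp at hl
  | cons a l ih =>
    cases l' with
    | nil => simp at hl
    | cons b l' =>
      rw [List.cons_append, List.cons_append, List.cons_lt_cons_iff]
      rcases List.cons_lt_cons_iff.1 h with hab | ⟨rfl, hab⟩
      · exact Or.inl hab
      · exact Or.inr ⟨rfl, ih hab (by simpa using hl)⟩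

variable {A : Type*} [Ring A] [Algebra 𝔽 A]

/-- The ordered monomial `E_0^{(k_0)} ⋯ E_{m-1}^{(k_{m-1})}`. -/
def ordMono (E : ℕ → A) : ℕ → (ℕ → ℕ) → A
  | 0, _ => 1
  | m + 1, k => ordMono E m k * dp (E m) (k m)

theorem ordMono_congr (E : ℕ → A) {m : ℕ} {k k' : ℕ → ℕ} (h : ∀ i < m, k i = k' i) :
    ordMono E m k = ordMono E m k' := by
  induction m with
  | zero => rfl
  | succ m ih =>
    rw [ordMono, ordMono, ih fun i hi => h i (hi.trans (Nat.lt_succ_self m)),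
      h m (Nat.lt_succ_self m)]

theorem ordMono_mul_dp (E : ℕ → A) (m : ℕ) (k : ℕ → ℕ) (t : ℕ) :
    ordMono E m k * dp (E m) t = ordMono E (m + 1) (Function.update k m t) := by
  rw [ordMono, Function.update_self]
  congr 1
  exact ordMono_congr E fun i hi => (Function.update_of_ne hi.ne _ _).symm

/-- The exponents `(k_m - k_{m-1}, …, k_1 - k_0, k_0)`. -/
def leadExp : ℕ → (ℕ → ℕ) → List ℕ
  | 0, k => [k 0]
  | m + 1, k => (k (m + 1) - k m) :: leadExp m k

@[simp] theorem length_leadExp (m : ℕ) (k : ℕ → ℕ) : (leadExp m k).length = m + 1 := by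
  induction m with
  | zero => rfl
  | succ m ih => simp [leadExp, ih]

/-- The products of a PBW monomial of the word `[m, …, 0]` with exponents satisfying `P` and an
ordered monomial in `E_0, …, E_{m-1}`. -/
def blockSet (E : ℕ → A) (T : ℕ → A ≃ₐ[𝔽] A) (m : ℕ) (P : List ℕ → Prop) : Set A :=
  {x | ∃ cs k, P cs ∧ cs.length = m + 1 ∧
    x = pbwMonomial E T (descWord (m + 1)) cs * ordMono E m k}

theorem smul_mem_span {S : Set A} {r : 𝔽} (hr : r ∈ 𝒜) {x : A} (hx : x ∈ Submodule.span 𝒜 S) :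
    r • x ∈ Submodule.span 𝒜 S :=
  Submodule.smul_mem _ (⟨r, hr⟩ : 𝒜) hx

namespace IsTypeASystem

variable {n : ℕ} {E F K K' : ℕ → A} {T : ℕ → A ≃ₐ[𝔽] A}

theorem commute_ordMono (h : IsTypeASystem n E F K K' T) {m : ℕ} (hm : m + 1 < n) (k : ℕ → ℕ)
    (c : ℕ) {l : ℕ} (hl : l ≤ m) : Commute (ordMono E l k) (dp (E (m + 1)) c) := by
  induction l with
  | zero => exact Commute.one_left _
  | succ l ih =>
    refine (ih (by omega)).mul_left (Commute.dp_dp ?_ _ _)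
    exact h.E_comm l (by omega) _ hm (by omega) (by unfold Adj; omega)

theorem T_ordMono (h : IsTypeASystem n E F K K' T) {m : ℕ} (hm : m + 1 < n) (k : ℕ → ℕ)
    {l : ℕ} (hl : l ≤ m) : T (m + 1) (ordMono E l k) = ordMono E l k := by
  induction l with
  | zero => exact map_one _
  | succ l ih =>
    have e : T (m + 1) (dp (E l) (k l)) = dp (E l) (k l) := by
      refine (map_dp (T (m + 1)).toAlgHom _ _).trans ?_
      exact congrArg (dp · _)
        (h.T_E_far _ hm l (by omega) (by omega) (by unfold Adj; omega))
    rw [ordMono, map_mul, ih (by omega), e]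

theorem mem_span_blockSet_succ (h : IsTypeASystem n E F K K' T) {m : ℕ} (hm : m + 1 < n)
    {P Q : List ℕ → Prop} {c : ℕ} (hPQ : ∀ cs, P cs → Q (c :: cs)) (r : ℕ) {x : A}
    (hx : x ∈ Submodule.span 𝒜 (blockSet E T m P)) :
    dp (E (m + 1)) c * T (m + 1) x * dp (E m) r ∈
      Submodule.span 𝒜 (blockSet E T (m + 1) Q) := by
  induction hx using Submodule.span_induction with
  | mem x hx =>
    obtain ⟨cs, k, hP, hl, rfl⟩ := hx
    refine Submodule.subset_span ⟨c :: cs, Function.update k m r, hPQ cs hP, by simp [hl], ?_⟩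
    rw [map_mul, h.T_ordMono hm k le_rfl, ← ordMono_mul_dp, descWord_succ (m + 1), pbwMonomial_cons]
    simp only [mul_assoc]
  | zero => simp
  | add x y _ _ hx hy =>
    rw [map_add, mul_add, add_mul]
    exact add_mem hx hy
  | smul a x _ hx =>
    rw [Subring.smul_def, map_smul, mul_smul_comm, smul_mul_assoc]
    exact smul_mem_span a.2 hx

/-- One straightening step: `E_{m+1}^{(t)}` is moved to the left of `E_m^{(k_m)}`. -/
theorem ordMono_mul_dp_eq_sum (h : IsTypeASystem n E F K K' T) {m : ℕ} (hm : m + 1 < n)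
    (k : ℕ → ℕ) (t : ℕ) :
    ordMono E (m + 1) k * dp (E (m + 1)) t = ∑ s ∈ Finset.range (t + 1),
      qq ^ (-(((k m : ℤ) - s) * ((t : ℤ) - s))) •
        (dp (E (m + 1)) (t - s) * T (m + 1) (ordMono E m k * dp (E m) s) *
          dpSub (E m) (k m) s) := by
  rw [ordMono, mul_assoc, h.dp_E_mul_dp_E m (by omega) (m + 1) hm (Or.inl rfl), Finset.mul_sum]
  refine Finset.sum_congr rfl fun s _ => ?_
  rw [mul_smul_comm, ← mul_assoc, ← mul_assoc, (h.commute_ordMono hm k _ le_rfl).eq, map_mul,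
    h.T_ordMono hm k le_rfl, mul_assoc (dp _ _) (ordMono E m k)]

theorem ordMono_mul_dp_mem (h : IsTypeASystem n E F K K' T) {m : ℕ} (hm : m < n)
    (k : ℕ → ℕ) (t : ℕ) :
    ordMono E m k * dp (E m) t ∈ Submodule.span 𝒜 (blockSet E T m fun _ => True) := by
  induction m generalizing t with
  | zero =>
    refine Submodule.subset_span ⟨[t], k, trivial, rfl, ?_⟩
    simp [descWord, pbwMonomial_cons, ordMono]
  | succ m ih =>
    rw [h.ordMono_mul_dp_eq_sum hm]
    refine Submodule.sum_mem _ fun s _ => smul_mem_span (qq_zpow_mem _) ?_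
    unfold dpSub
    split_ifs
    · exact h.mem_span_blockSet_succ hm (fun _ _ => trivial) _ (ih (by omega) s)
    · simp

theorem ordMono_sub_mem (h : IsTypeASystem n E F K K' T) {m : ℕ} (hm : m < n)
    {k : ℕ → ℕ} (hk : Monotone k) :
    ordMono E (m + 1) k - pbwMonomial E T (descWord (m + 1)) (leadExp m k) ∈
      Submodule.span 𝒜 (blockSet E T m (leadExp m k < ·)) := by
  induction m with
  | zero => simp [ordMono, descWord, leadExp, pbwMonomial_cons]
  | succ m ih =>
    have hkm : k m ≤ k (m + 1) := hk (Nat.le_succ m)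
    rw [ordMono, h.ordMono_mul_dp_eq_sum hm,
      ← Finset.add_sum_erase _ _ (Finset.mem_range.2 (Nat.lt_succ_of_le hkm)), add_sub_right_comm]
    refine add_mem ?_ (Submodule.sum_mem _ fun s hs => smul_mem_span (qq_zpow_mem _) ?_)
    · have := h.mem_span_blockSet_succ hm (P := (leadExp m k < ·))
        (Q := (leadExp (m + 1) k < ·)) (c := k (m + 1) - k m)
        (fun cs hcs => List.cons_lt_cons_iff.2 (Or.inr ⟨rfl, hcs⟩)) 0 (ih (by omega))
      rw [map_sub, mul_sub, sub_mul] at this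
      rw [descWord_succ (m + 1), leadExp, pbwMonomial_cons]
      simpa [dpSub, ordMono, leadExp] using this
    · unfold dpSub
      split_ifs with hs'
      · refine h.mem_span_blockSet_succ hm (P := fun _ => True) (fun cs _ => ?_) _
          (h.ordMono_mul_dp_mem (by omega) k s)
        have hne : s ≠ k m := Finset.ne_of_mem_erase hs
        exact List.cons_lt_cons_iff.2 (Or.inl (by omega))
      · simp

/-- The PBW monomials of `longWord m` whose exponents satisfy `P`. -/
def pbwSet (E : ℕ → A) (T : ℕ → A ≃ₐ[𝔽] A) (m : ℕ) (P : List ℕ → Prop) : Set A :=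
  {x | ∃ cs, P cs ∧ cs.length = (longWord m).length ∧ x = pbwMonomial E T (longWord m) cs}

theorem pbwMonomial_mul_mem (h : IsTypeASystem n E F K K' T) {m : ℕ} (hm : m < n)
    {Q : List ℕ → Prop} {cs : List ℕ} (hcs : cs.length = m + 1) (hQ : ∀ ds, Q (cs ++ ds)) {x : A}
    (hx : x ∈ Submodule.span 𝒜 (pbwSet E T m fun _ => True)) :
    pbwMonomial E T (descWord (m + 1)) cs * x ∈ Submodule.span 𝒜 (pbwSet E T (m + 1) Q) := by
  induction hx using Submodule.span_induction with
  | mem x hx =>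
    obtain ⟨ds, -, hl, rfl⟩ := hx
    refine Submodule.subset_span ⟨cs ++ ds, hQ ds, ?_, ?_⟩
    · rw [length_longWord_succ, List.length_append, hl, hcs]
    · exact (h.pbwMonomial_descWord_append hm
        (fun i hi => Nat.succ_lt_succ (lt_of_mem_longWord hi)) hcs ds).symm
  | zero => simp
  | add x y _ _ hx hy =>
    rw [mul_add]
    exact add_mem hx hy
  | smul a x _ hx =>
    rw [Subring.smul_def, mul_smul_comm]
    exact smul_mem_span a.2 hx

theorem mem_span_pbwSet_of_mem_span_blockSet (h : IsTypeASystem n E F K K' T) {m : ℕ} (hm : m < n)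
    {P Q : List ℕ → Prop} (hPQ : ∀ cs ds, cs.length = m + 1 → P cs → Q (cs ++ ds))
    (hmem : ∀ k, ordMono E m k ∈ Submodule.span 𝒜 (pbwSet E T m fun _ => True)) {x : A}
    (hx : x ∈ Submodule.span 𝒜 (blockSet E T m P)) :
    x ∈ Submodule.span 𝒜 (pbwSet E T (m + 1) Q) := by
  refine Submodule.span_le.2 ?_ hx
  rintro _ ⟨cs, k, hP, hl, rfl⟩
  exact h.pbwMonomial_mul_mem hm hl (fun ds => hPQ cs ds hl hP) (hmem k)

/-- Ordered monomials are integral combinations of PBW monomials. -/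
theorem ordMono_mem (h : IsTypeASystem n E F K K' T) {m : ℕ} (hm : m ≤ n) (k : ℕ → ℕ) :
    ordMono E m k ∈ Submodule.span 𝒜 (pbwSet E T m fun _ => True) := by
  induction m generalizing k with
  | zero => exact Submodule.subset_span ⟨[], trivial, rfl, by simp [ordMono]⟩
  | succ m ih =>
    exact h.mem_span_pbwSet_of_mem_span_blockSet hm (fun _ _ _ _ => trivial)
      (fun k' => ih (by omega) k') (h.ordMono_mul_dp_mem hm k (k m))

/-- For increasing exponents the expansion of an ordered monomial into PBW monomials is
unitriangular for the lexicographic order. -/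
theorem ordMono_sub_pbwMonomial_mem (h : IsTypeASystem n E F K K' T) {m : ℕ} (hm : m < n)
    {k : ℕ → ℕ} (hk : Monotone k) :
    ordMono E (m + 1) k - pbwMonomial E T (longWord (m + 1))
        (leadExp m k ++ List.replicate (longWord m).length 0) ∈
      Submodule.span 𝒜 (pbwSet E T (m + 1)
        (leadExp m k ++ List.replicate (longWord m).length 0 < ·)) := by
  have e := h.pbwMonomial_descWord_append hm
    (fun i hi => Nat.succ_lt_succ (lt_of_mem_longWord hi)) (length_leadExp m k)
    (List.replicate (longWord m).length 0)
  rw [pbwMonomial_replicate_zero, mul_one] at e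
  rw [longWord, e]
  refine h.mem_span_pbwSet_of_mem_span_blockSet hm (fun cs ds hl hcs => ?_)
    (h.ordMono_mem hm.le) (h.ordMono_sub_mem hm hk)
  exact append_lt_append_of_lt hcs (by simp [hl]) _ _

end IsTypeASystem

end Expansion

section Relations

variable {n : ℕ} {i j : Fin n}

theorem aTypeA_self (i : Fin n) : aTypeA n i i = 2 := if_pos rfl

theorem aTypeA_adj (h : Adj i j) : aTypeA n i j = -1 := by
  have hne : i ≠ j := by
    rintro rfl
    unfold Adj at h
    omega
  exact (if_neg hne).trans (if_pos h)

theorem aTypeA_far (hne : i ≠ j) (h : ¬ Adj i j) : aTypeA n i j = 0 :=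
  (if_neg hne).trans (if_neg h)

/-- The quantized enveloping algebra of type `A_n`. -/
abbrev UA_n (n : ℕ) := U n (aTypeA n) (fun _ => 1)

theorem mk_eq_of_rel {a : Fin n → Fin n → ℤ} {d : Fin n → ℕ} {x y : FreeAlgebra 𝔽 (Gen n)}
    (h : Rel n a d x y) : mk n a d x = mk n a d y :=
  RingQuot.mkAlgHom_rel 𝔽 h

local notation "Eₐ" => Eg n (aTypeA n) (fun _ => 1)
local notation "Fₐ" => Fg n (aTypeA n) (fun _ => 1)
local notation "Kₐ" => Kg n (aTypeA n) (fun _ => 1)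
local notation "Kinvₐ" => Kinvg n (aTypeA n) (fun _ => 1)

theorem neg_smul_U (c : 𝔽) (x : UA_n n) : (-c) • x = -(c • x) :=
  neg_smul c x

theorem Kg_mul_Kinvg (i : Fin n) : Kₐ i * Kinvₐ i = 1 := by
  simpa [Kg, Kinvg] using mk_eq_of_rel (Rel.KKinv (a := aTypeA n) (d := fun _ => 1) i)

theorem Kinvg_mul_Kg (i : Fin n) : Kinvₐ i * Kₐ i = 1 := by
  simpa [Kg, Kinvg] using mk_eq_of_rel (Rel.KinvK (a := aTypeA n) (d := fun _ => 1) i)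

theorem Kg_comm (i j : Fin n) : Kₐ i * Kₐ j = Kₐ j * Kₐ i := by
  simpa [Kg, Kinvg] using mk_eq_of_rel (Rel.KK (a := aTypeA n) (d := fun _ => 1) i j)

theorem Kg_mul_Eg (i j : Fin n) : Kₐ i * Eₐ j = qq ^ aTypeA n i j • (Eₐ j * Kₐ i) := by
  simpa [Kg, Eg] using mk_eq_of_rel (Rel.KE (a := aTypeA n) (d := fun _ => 1) i j)

theorem Kg_mul_Fg (i j : Fin n) : Kₐ i * Fₐ j = qq ^ (-aTypeA n i j) • (Fₐ j * Kₐ i) := by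
  simpa [Kg, Fg] using mk_eq_of_rel (Rel.KF (a := aTypeA n) (d := fun _ => 1) i j)

theorem Eg_Fg_self (i : Fin n) : Eₐ i * Fₐ i - Fₐ i * Eₐ i = (qq - qq⁻¹)⁻¹ • (Kₐ i - Kinvₐ i) := by
  simpa [Eg, Fg, Kg, Kinvg] using mk_eq_of_rel (Rel.EF (a := aTypeA n) (d := fun _ => 1) i i)

theorem Eg_Fg_comm (h : i ≠ j) : Eₐ i * Fₐ j = Fₐ j * Eₐ i := by
  simpa [Eg, Fg, h, sub_eq_zero] using
    mk_eq_of_rel (Rel.EF (a := aTypeA n) (d := fun _ => 1) i j)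

theorem qBinom_zero_right (m : ℕ) : qBinom 1 m 0 = 1 := by
  simp [qBinom, qFact, div_self (qFact_ne_zero m)]

theorem qBinom_self (m : ℕ) : qBinom 1 m m = 1 := by
  simp [qBinom, qFact, div_self (qFact_ne_zero m)]

theorem qBinom_two_one : qBinom 1 2 1 = qq + qq⁻¹ := by
  simp [qBinom, qFact, qInt_one, qInt_two]

theorem Eg_comm (hne : i ≠ j) (h : ¬ Adj i j) : Eₐ i * Eₐ j = Eₐ j * Eₐ i := by
  have := mk_eq_of_rel (Rel.serreE (a := aTypeA n) (d := fun _ => 1) i j hne)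
  rw [aTypeA_far hne h] at this
  simp [Finset.sum_range_succ, qBinom_zero_right, qBinom_self] at this
  exact (eq_of_sub_eq_zero (by simpa [Eg, sub_eq_add_neg, add_comm] using this)).symm

theorem Eg_serre (hne : i ≠ j) (h : Adj i j) :
    Eₐ i ^ 2 * Eₐ j - (qq + qq⁻¹) • (Eₐ i * Eₐ j * Eₐ i) + Eₐ j * Eₐ i ^ 2 = 0 := by
  have := mk_eq_of_rel (Rel.serreE (a := aTypeA n) (d := fun _ => 1) i j hne)
  rw [aTypeA_adj h] at this
  simp [Finset.sum_range_succ, qBinom_zero_right, qBinom_self, qBinom_two_one] at this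
  rw [← neg_add, add_comm qq⁻¹ qq] at this
  rw [sub_eq_add_neg, ← neg_smul_U, add_right_comm, add_comm (Eₐ i ^ 2 * Eₐ j), add_right_comm]
  exact this

theorem Ediv_eq_dp (i : Fin n) (m : ℕ) :
    Ediv n (aTypeA n) (fun _ => 1) i m = dp (Eₐ i) m := rfl

theorem Fdiv_eq_dp (i : Fin n) (m : ℕ) :
    Fdiv n (aTypeA n) (fun _ => 1) i m = dp (Fₐ i) m := rfl

variable {T : Fin n → UA_n n ≃ₐ[𝔽] UA_n n}

theorem IsBraid.T_Eg_self (hT : IsBraid n (aTypeA n) (fun _ => 1) T) (i : Fin n) :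
    T i (Eₐ i) = -(Kinvₐ i * Fₐ i) := by
  rw [← one_smul 𝔽 (Kinvₐ i * Fₐ i), ← neg_smul_U]
  simpa [Ediv_eq_dp, Fdiv_eq_dp] using hT.TEself i 1

theorem IsBraid.T_Fg_self (hT : IsBraid n (aTypeA n) (fun _ => 1) T) (i : Fin n) :
    T i (Fₐ i) = -(Eₐ i * Kₐ i) := by
  rw [← one_smul 𝔽 (Eₐ i * Kₐ i), ← neg_smul_U]
  simpa [Ediv_eq_dp, Fdiv_eq_dp] using hT.TFself i 1

theorem IsBraid.T_Kg_self (hT : IsBraid n (aTypeA n) (fun _ => 1) T) (i : Fin n) :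
    T i (Kₐ i) = Kinvₐ i := by
  rw [hT.TK i i, aTypeA_self, Kzpow, if_neg (by decide)]
  change Kₐ i * Kinvₐ i ^ 2 = Kinvₐ i
  rw [pow_two, ← mul_assoc, Kg_mul_Kinvg, one_mul]

theorem IsBraid.T_Eg_adj (hT : IsBraid n (aTypeA n) (fun _ => 1) T) (hne : i ≠ j)
    (h : Adj i j) : T i (Eₐ j) = Eₐ j * Eₐ i - qq⁻¹ • (Eₐ i * Eₐ j) := by
  have := hT.TE i j 1 hne
  rw [aTypeA_adj h] at this
  rw [sub_eq_add_neg, ← neg_smul_U]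
  simpa [Ediv_eq_dp, Finset.sum_range_succ] using this

theorem IsBraid.T_Fg_adj (hT : IsBraid n (aTypeA n) (fun _ => 1) T) (hne : i ≠ j)
    (h : Adj i j) : T i (Fₐ j) = Fₐ i * Fₐ j - qq • (Fₐ j * Fₐ i) := by
  have := hT.TF i j 1 hne
  rw [aTypeA_adj h] at this
  rw [sub_eq_add_neg, ← neg_smul_U]
  simpa [Fdiv_eq_dp, Finset.sum_range_succ] using this

theorem IsBraid.T_Kg_adj (hT : IsBraid n (aTypeA n) (fun _ => 1) T)
    (h : Adj i j) : T i (Kₐ j) = Kₐ j * Kₐ i := by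
  rw [hT.TK i j, aTypeA_adj h]
  simp [Kzpow]

theorem IsBraid.T_Eg_far (hT : IsBraid n (aTypeA n) (fun _ => 1) T) (hne : i ≠ j)
    (h : ¬ Adj i j) : T i (Eₐ j) = Eₐ j := by
  have := hT.TE i j 1 hne
  rw [aTypeA_far hne h] at this
  simpa [Ediv_eq_dp] using this

theorem IsBraid.T_Fg_far (hT : IsBraid n (aTypeA n) (fun _ => 1) T) (hne : i ≠ j)
    (h : ¬ Adj i j) : T i (Fₐ j) = Fₐ j := by
  have := hT.TF i j 1 hne
  rw [aTypeA_far hne h] at this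
  simpa [Fdiv_eq_dp] using this

theorem IsBraid.T_Kg_far (hT : IsBraid n (aTypeA n) (fun _ => 1) T) (hne : i ≠ j)
    (h : ¬ Adj i j) : T i (Kₐ j) = Kₐ j := by
  rw [hT.TK i j, aTypeA_far hne h]
  simp [Kzpow]

end Relations

section Indexing

variable {N : ℕ}

theorem val_ofNat {i : ℕ} (hi : i < N + 1) : (Fin.ofNat (N + 1) i : ℕ) = i :=
  Nat.mod_eq_of_lt hi

theorem ofNat_ne {i j : ℕ} (hi : i < N + 1) (hj : j < N + 1) (h : i ≠ j) :
    Fin.ofNat (N + 1) i ≠ Fin.ofNat (N + 1) j := fun e =>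
  h (by rw [← val_ofNat hi, ← val_ofNat hj, e])

theorem adj_ofNat {i j : ℕ} (hi : i < N + 1) (hj : j < N + 1) :
    Adj (Fin.ofNat (N + 1) i : ℕ) (Fin.ofNat (N + 1) j : ℕ) ↔ Adj i j := by
  rw [val_ofNat hi, val_ofNat hj]

theorem Adj.ne {i j : ℕ} (h : Adj i j) : i ≠ j := by
  unfold Adj at h
  omega

theorem isTypeASystem {T : Fin (N + 1) → UA_n (N + 1) ≃ₐ[𝔽] UA_n (N + 1)}
    (hT : IsBraid (N + 1) (aTypeA (N + 1)) (fun _ => 1) T) :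
    IsTypeASystem (N + 1) (fun i => Eg (N + 1) (aTypeA (N + 1)) (fun _ => 1) (Fin.ofNat (N + 1) i))
      (fun i => Fg (N + 1) (aTypeA (N + 1)) (fun _ => 1) (Fin.ofNat (N + 1) i))
      (fun i => Kg (N + 1) (aTypeA (N + 1)) (fun _ => 1) (Fin.ofNat (N + 1) i))
      (fun i => Kinvg (N + 1) (aTypeA (N + 1)) (fun _ => 1) (Fin.ofNat (N + 1) i))
      (fun i => T (Fin.ofNat (N + 1) i)) where
  K_mul_K' i _ := Kg_mul_Kinvg _
  K'_mul_K i _ := Kinvg_mul_Kg _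
  K_comm i _ j _ := Kg_comm _ _
  K_E_self i _ := by
    rw [Kg_mul_Eg, aTypeA_self]
    norm_cast
  K_E_adj i hi j hj h := by
    rw [Kg_mul_Eg, aTypeA_adj ((adj_ofNat hi hj).2 h), zpow_neg_one]
  K_F_self i _ := by
    rw [Kg_mul_Fg, aTypeA_self, zpow_neg, inv_pow]
    norm_cast
  K_F_adj i hi j hj h := by
    rw [Kg_mul_Fg, aTypeA_adj ((adj_ofNat hi hj).2 h), neg_neg, zpow_one]
  E_F_self i _ := Eg_Fg_self _
  E_F_comm i hi j hj h := Eg_Fg_comm (ofNat_ne hi hj h)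
  E_comm i hi j hj h h' := Eg_comm (ofNat_ne hi hj h) (mt (adj_ofNat hi hj).1 h')
  serre i hi j hj h := Eg_serre (ofNat_ne hi hj h.ne) ((adj_ofNat hi hj).2 h)
  T_E_self i _ := hT.T_Eg_self _
  T_F_self i _ := hT.T_Fg_self _
  T_K_self i _ := hT.T_Kg_self _
  T_E_adj i hi j hj h := hT.T_Eg_adj (ofNat_ne hi hj h.ne) ((adj_ofNat hi hj).2 h)
  T_F_adj i hi j hj h := hT.T_Fg_adj (ofNat_ne hi hj h.ne) ((adj_ofNat hi hj).2 h)
  T_K_adj i hi j hj h := hT.T_Kg_adj ((adj_ofNat hi hj).2 h)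
  T_E_far i hi j hj h h' := hT.T_Eg_far (ofNat_ne hi hj h) (mt (adj_ofNat hi hj).1 h')
  T_F_far i hi j hj h h' := hT.T_Fg_far (ofNat_ne hi hj h) (mt (adj_ofNat hi hj).1 h')
  T_K_far i hi j hj h h' := hT.T_Kg_far (ofNat_ne hi hj h) (mt (adj_ofNat hi hj).1 h')

theorem pbw_map_ofNat (T : Fin (N + 1) → UA_n (N + 1) ≃ₐ[𝔽] UA_n (N + 1)) (w cs : List ℕ) :
    pbw (N + 1) (aTypeA (N + 1)) (fun _ => 1) T (w.map (Fin.ofNat (N + 1))) cs =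
      pbwMonomial (fun i => Eg (N + 1) (aTypeA (N + 1)) (fun _ => 1) (Fin.ofNat (N + 1) i))
        (fun i => T (Fin.ofNat (N + 1) i)) w cs := by
  induction w generalizing cs with
  | nil => cases cs <;> rfl
  | cons i w ih =>
    cases cs with
    | nil => rfl
    | cons c cs => rw [List.map_cons, pbw, ih, pbwMonomial_cons, Ediv_eq_dp]

theorem mono_append (n : ℕ) (a : Fin n → Fin n → ℤ) (d : Fin n → ℕ) {w : List (Fin n)}
    {cs : List ℕ} (hl : w.length = cs.length) (w' : List (Fin n)) (cs' : List ℕ) :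
    mono n a d (w ++ w') (cs ++ cs') = mono n a d w cs * mono n a d w' cs' := by
  induction w generalizing cs with
  | nil =>
    cases cs with
    | nil => cases cs' <;> simp [mono]
    | cons => simp at hl
  | cons i w ih =>
    cases cs with
    | nil => simp at hl
    | cons c cs =>
      rw [List.cons_append, List.cons_append, mono, mono, ih (by simpa using hl), mul_assoc]

theorem mono_map_range (m : ℕ) (k : ℕ → ℕ) :
    mono (N + 1) (aTypeA (N + 1)) (fun _ => 1) ((List.range m).map (Fin.ofNat (N + 1)))
        ((List.range m).map k) =
      ordMono (fun i => Eg (N + 1) (aTypeA (N + 1)) (fun _ => 1) (Fin.ofNat (N + 1) i)) m k := by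
  induction m with
  | zero => rfl
  | succ m ih =>
    rw [List.range_succ, List.map_append, List.map_append, mono_append _ _ _ (by simp), ih,
      ordMono]
    simp [mono, Ediv_eq_dp]

theorem descWord_eq (m : ℕ) : descWord m = (List.range m).map (m - 1 - ·) := by
  induction m with
  | zero => rfl
  | succ m ih =>
    rw [descWord_succ, ih, List.range_succ_eq_map, List.map_cons, List.map_map]
    congr 1
    refine List.map_congr_left fun x hx => ?_
    simp only [Function.comp_apply, Nat.succ_eq_add_one]
    omega

theorem longWord_eq (m : ℕ) : longWord m =
    (List.range m).reverse.flatMap fun j => (List.range (j + 1)).map (m - 1 - ·) := by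
  induction m with
  | zero => rfl
  | succ m ih =>
    rw [longWord, ih, List.range_succ, List.reverse_append, descWord_eq]
    simp only [List.reverse_cons, List.reverse_nil, List.nil_append, List.cons_append,
      List.flatMap_cons, List.map_flatMap, List.map_map]
    congr 1
    refine List.flatMap_congr fun j hj => List.map_congr_left fun x hx => ?_
    simp only [List.mem_reverse, List.mem_range] at hj hx
    simp only [Function.comp_apply]
    omega

theorem iwordA_eq (N : ℕ) : iwordA (N + 1) = (longWord (N + 1)).map (Fin.ofNat (N + 1)) := by
  rw [iwordA, jwordA, longWord_eq, List.map_flatMap, List.map_flatMap]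
  refine List.flatMap_congr fun j hj => ?_
  simp only [List.mem_reverse, List.mem_range] at hj
  refine List.ext_getElem (by simp; omega) fun x hx _ => ?_
  have hx' : x ≤ j ∧ x ≤ N := by simpa using hx
  apply Fin.ext
  simp [Nat.mod_eq_of_lt (by omega : N - x < N + 1)]

theorem length_jwordA (N : ℕ) : (jwordA (N + 1)).length = (longWord (N + 1)).length := by
  have := congrArg List.length (iwordA_eq N)
  simpa [iwordA] using this

theorem two_mul_length_longWord (m : ℕ) : 2 * (longWord m).length = m * (m + 1) := by
  induction m with
  | zero => rfl
  | succ m ih =>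
    rw [length_longWord_succ, mul_add, ih]
    ring

theorem lexLt_of_ofFn_lt {r : ℕ} {c d : Fin r → ℕ} (h : List.ofFn c < List.ofFn d) :
    lexLt c d := by
  induction r with
  | zero => simp at h
  | succ r ih =>
    rw [List.ofFn_succ, List.ofFn_succ, List.cons_lt_cons_iff] at h
    rcases h with h | ⟨h0, h⟩
    · exact ⟨0, fun s hs => absurd hs (Fin.not_lt_zero s), h⟩
    · obtain ⟨t, ht, hlt⟩ := ih h
      refine ⟨t.succ, fun s hs => ?_, hlt⟩
      induction s using Fin.cases with
      | zero => exact h0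
      | succ s => exact ht s (Fin.succ_lt_succ_iff.1 hs)

theorem leadExp_sum_eq {g : ℕ → ℕ} {m : ℕ} (hm : m ≤ N) :
    leadExp m (fun p => ∑ x ∈ Finset.Icc (N - p) N, g x) =
      (List.range (m + 1)).map fun x => g (N - m + x) := by
  induction m with
  | zero => simp [leadExp]
  | succ m ih =>
    have hI : Finset.Icc (N - (m + 1)) N = insert (N - (m + 1)) (Finset.Icc (N - m) N) := by
      ext x
      simp only [Finset.mem_Icc, Finset.mem_insert]
      omega
    rw [leadExp, ih (by omega), List.range_succ_eq_map (n := m + 1), List.map_cons, List.map_map,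
      hI, Finset.sum_insert (by simp; omega)]
    congr 1
    · simp
    · refine List.map_congr_left fun x hx => ?_
      simp only [Function.comp_apply]
      congr 1
      omega

theorem monotone_sum_Icc (g : ℕ → ℕ) :
    Monotone fun p => ∑ x ∈ Finset.Icc (N - p) N, g x := fun p p' h =>
  Finset.sum_le_sum_of_subset (Finset.Icc_subset_Icc_left (by omega))

end Indexing

end ChariXi

theorem chariXi_lemma23_typeA (n : ℕ) (hn : 0 < n)
    (T : Fin n → U n (aTypeA n) (fun _ => 1) ≃ₐ[𝔽] U n (aTypeA n) (fun _ => 1))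
    (hT : IsBraid n (aTypeA n) (fun _ => 1) T)
    (c : Fin (jwordA n).length → ℕ)
    (hc : ∀ k : Fin (jwordA n).length, n ≤ (k : ℕ) → c k = 0) :
    (jwordA n).length = n * (n + 1) / 2 ∧
    -- the extension of `c` by zero to all of `ℕ`
    ∀ cext : ℕ → ℕ,
      (cext = fun m => if h : m < (jwordA n).length then c ⟨m, h⟩ else 0) →
      ∃ (s : Finset (Fin (jwordA n).length → ℕ)) (ξ : (Fin (jwordA n).length → ℕ) → 𝔽),
        (∀ e ∈ s, lexLt c e ∧ ξ e ∈ 𝒜) ∧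
        mono n (aTypeA n) (fun _ => 1) (List.finRange n)
            (List.ofFn fun p : Fin n =>
              ∑ m ∈ Finset.Icc (n - 1 - (p : ℕ)) (n - 1), cext m)
          = pbw n (aTypeA n) (fun _ => 1) T (iwordA n) (List.ofFn c)
            + ∑ e ∈ s, ξ e • pbw n (aTypeA n) (fun _ => 1) T (iwordA n) (List.ofFn e) := by
  obtain ⟨N, rfl⟩ : ∃ N, n = N + 1 := ⟨n - 1, by omega⟩
  have hlen := length_jwordA N
  have htwo := two_mul_length_longWord (N + 1)
  refine ⟨by omega, ?_⟩
  rintro g rfl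
  set g : ℕ → ℕ := fun m => if h : m < (jwordA (N + 1)).length then c ⟨m, h⟩ else 0 with hg
  set k : ℕ → ℕ := fun p => ∑ x ∈ Finset.Icc (N - p) N, g x with hk
  have hmono : mono (N + 1) (aTypeA (N + 1)) (fun _ => 1) (List.finRange (N + 1))
      (List.ofFn fun p : Fin (N + 1) =>
        ∑ m ∈ Finset.Icc (N + 1 - 1 - (p : ℕ)) (N + 1 - 1), g m) =
      ordMono (fun i => Eg (N + 1) (aTypeA (N + 1)) (fun _ => 1) (Fin.ofNat (N + 1) i))
        (N + 1) k := by
    rw [← mono_map_range]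
    congr 1
    · refine List.ext_getElem (by simp) fun x hx _ => ?_
      apply Fin.ext
      have hx' : x < N + 1 := by simpa using hx
      simp [Nat.mod_eq_of_lt hx']
    · refine List.ext_getElem (by simp) fun x _ _ => ?_
      simp only [List.getElem_ofFn, List.getElem_map, List.getElem_range, hk]
      rfl
  have hlead : leadExp N k ++ List.replicate (longWord N).length 0 = List.ofFn c := by
    rw [hk, leadExp_sum_eq le_rfl]
    have hl := length_longWord_succ N
    refine List.ext_getElem (by simp; omega) fun x hx hx' => ?_
    have hx'' : x < (jwordA (N + 1)).length := by simpa using hx'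
    rw [List.getElem_append]
    split_ifs with h
    · simp [hg, hx'']
    · simp only [List.length_map, List.length_range, not_lt] at h
      simp [hc ⟨x, hx''⟩ h]
  have hmem := (isTypeASystem hT).ordMono_sub_pbwMonomial_mem (Nat.lt_succ_self N)
    (monotone_sum_Icc (N := N) g)
  rw [← hk, hlead] at hmem
  have hset : IsTypeASystem.pbwSet
      (fun i => Eg (N + 1) (aTypeA (N + 1)) (fun _ => 1) (Fin.ofNat (N + 1) i))
      (fun i => T (Fin.ofNat (N + 1) i)) (N + 1) (List.ofFn c < ·) ⊆
      (fun e : Fin (jwordA (N + 1)).length → ℕ =>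
        pbw (N + 1) (aTypeA (N + 1)) (fun _ => 1) T (iwordA (N + 1)) (List.ofFn e)) ''
        {e | lexLt c e} := by
    rintro _ ⟨cs, hlt, hl, rfl⟩
    have hcs : List.ofFn (fun x : Fin (jwordA (N + 1)).length => cs[x]'(by omega)) = cs :=
      List.ext_getElem (by simp; omega) fun x _ _ => by simp
    refine ⟨fun x => cs[x]'(by omega), lexLt_of_ofFn_lt (by rwa [hcs]), ?_⟩
    simp only
    rw [hcs, iwordA_eq, pbw_map_ofNat]
  obtain ⟨l, hl, hsum⟩ := (Finsupp.mem_span_image_iff_linearCombination 𝒜).1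
    (Submodule.span_mono hset hmem)
  refine ⟨l.support, fun e => (l e : 𝔽), fun e he => ⟨hl he, (l e).2⟩, ?_⟩
  rw [hmono, ← sub_eq_iff_eq_add', iwordA_eq, pbw_map_ofNat, ← hsum, ← iwordA_eq]
  rfl
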